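/- arXiv:0804.0563 — 2 statements merged into one kernel-verified Lean document; each statement's English description precedes it below -/
import Mathlib

section
/- (Growth and Lipschitz estimates for Tf_hom) There exists a constant C > 0 such that: α|ξ| ≤ Tf_hom(s,ξ) ≤ β(1+|ξ|) and |Tf_hom(s,ξ) − Tf_hom(s,ξ′)| ≤ C|ξ−ξ′| for every s ∈ M and all ξ, ξ′ ∈ [T_s M]^N. Moreover, extending Tf_hom to all of ℝ^d × ℝ^{d×N} by the homogenized density g_hom of the modified integrand g, there exists C₁ > 0 such that |Tf_hom(s,ξ) − Tf_hom(s′,ξ)| ≤ C₁|s−s′|(1+|ξ|) for every s, s′ ∈ ℝ^d and ξ ∈ ℝ^{d×N}; in particular Tf_hom is continuous. -/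
open MeasureTheory Filter Set
open scoped ENNReal RealInnerProductSpace Topology NNReal

noncomputable section

/-- Euclidean space `ℝ^N`. -/
abbrev EN (N : ℕ) : Type := EuclideanSpace ℝ (Fin N)

/-- `d × N` matrices, viewed as continuous linear maps `ℝ^N → ℝ^d`. -/
abbrev Mat (d N : ℕ) : Type := EN N →L[ℝ] EN d

variable {N d : ℕ}

/-- The tangent set of `M ⊆ ℝ^d` at `s`: velocities of curves in `M` through `s`. -/
def TangentSet (M : Set (EN d)) (s : EN d) : Set (EN d) :=
  {v | ∃ γ : ℝ → EN d, (∀ t, γ t ∈ M) ∧ γ 0 = s ∧ HasDerivAt γ v 0}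

/-- A matrix `ξ ∈ ℝ^{d×N}` has all its columns in the tangent space `T_s M`,
i.e. `ξ ∈ [T_s M]^N`. -/
def TangentCols (M : Set (EN d)) (s : EN d) (ξ : Mat d N) : Prop :=
  ∀ i : Fin N, ξ (EuclideanSpace.single i 1) ∈ TangentSet M s

/-- `T` is a smooth `m`-dimensional submanifold (without boundary) of `ℝ^n`,
described locally as a regular level set. -/
def IsSubmanifoldDim (n m : ℕ) (T : Set (EN n)) : Prop :=
  ∀ x ∈ T, ∃ (U : Set (EN n)) (F : EN n → EN (n - m)),
    IsOpen U ∧ x ∈ U ∧ ContDiffOn ℝ (⊤ : ℕ∞) F U ∧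
    (T ∩ U = {y ∈ U | F y = 0}) ∧ ∀ y ∈ U, Function.Surjective (fderiv ℝ F y)

/-- `M` is a nonempty compact connected smooth submanifold of `ℝ^d` without boundary. -/
def IsNiceManifold (d : ℕ) (M : Set (EN d)) : Prop :=
  M.Nonempty ∧ IsCompact M ∧ IsConnected M ∧ ∃ m : ℕ, m ≤ d ∧ IsSubmanifoldDim d m M

/-- A finite union of subsets of `(N-2)`-dimensional submanifolds of `ℝ^N`. -/
def IsSigmaSet (N : ℕ) (Sg : Set (EN N)) : Prop :=
  ∃ (k : ℕ) (S : Fin k → Set (EN N)), Sg = ⋃ i, S i ∧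
    ∀ i, ∃ T : Set (EN N), IsSubmanifoldDim N (N - 2) T ∧ S i ⊆ T

/-- `u ∈ W^{1,1}(A;ℝ^d)` with weak gradient `Du`. -/
def MemW11 (A : Set (EN N)) (u : EN N → EN d) (Du : EN N → Mat d N) : Prop :=
  IntegrableOn u A volume ∧ IntegrableOn Du A volume ∧
    ∀ φ : EN N → ℝ, ContDiff ℝ (⊤ : ℕ∞) φ → HasCompactSupport φ → tsupport φ ⊆ A →
      ∀ y : EN N, ∫ x in A, fderiv ℝ φ x y • u x = - ∫ x in A, φ x • Du x y

/-- `u` takes values in `M` almost everywhere on `A`. -/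
def AeIn (A : Set (EN N)) (u : EN N → EN d) (M : Set (EN d)) : Prop :=
  ∀ᵐ x ∂(volume.restrict A), u x ∈ M

/-- Recession function of `h : ℝ^{d×N} → ℝ`: `h^∞(ξ) = limsup_{t→∞} h(tξ)/t`. -/
def recc (h : Mat d N → ℝ) (ξ : Mat d N) : ℝ :=
  Filter.limsup (fun t : ℝ => h (t • ξ) / t) Filter.atTop

/-- The open cube `(0,t)^N`. -/
def posCube (N : ℕ) (t : ℝ) : Set (EN N) := {x | ∀ i, x i ∈ Set.Ioo (0 : ℝ) t}

/-- The open unit cube `(-1/2,1/2)^N`. -/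
def unitCube (N : ℕ) : Set (EN N) := {x | ∀ i, x i ∈ Set.Ioo (-(1/2) : ℝ) (1/2)}

/-- The cell infimum over `W^{1,∞}_0((0,t)^N; T_s M)` defining `Tf_hom`. -/
def tanCell (f : EN N → Mat d N → ℝ) (M : Set (EN d)) (s : EN d) (ξ : Mat d N)
    (t : ℝ) : ℝ :=
  sInf {c : ℝ | ∃ (φ : EN N → EN d) (K : ℝ≥0), LipschitzWith K φ ∧
    (∀ x, φ x ∈ TangentSet M s) ∧ (∀ x, x ∉ posCube N t → φ x = 0) ∧
    c = (t ^ N)⁻¹ * ∫ x in posCube N t, f x (ξ + fderiv ℝ φ x)}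

/-- The tangentially homogenized density `Tf_hom` (the limit as `t → ∞`,
realized as a limsup). -/
def Tfhom (f : EN N → Mat d N → ℝ) (M : Set (EN d)) (s : EN d) (ξ : Mat d N) : ℝ :=
  Filter.limsup (fun t => tanCell f M s ξ t) Filter.atTop

/-- The unconstrained cell infimum over `W^{1,∞}_0((0,t)^N; ℝ^d)`. -/
def freeCell (h : EN N → Mat d N → ℝ) (ξ : Mat d N) (t : ℝ) : ℝ :=
  sInf {c : ℝ | ∃ (φ : EN N → EN d) (K : ℝ≥0), LipschitzWith K φ ∧
    (∀ x, x ∉ posCube N t → φ x = 0) ∧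
    c = (t ^ N)⁻¹ * ∫ x in posCube N t, h x (ξ + fderiv ℝ φ x)}

/-- The usual homogenized density of a parametrized integrand `g(y,s,ξ)`. -/
def ghomOf (g : EN N → EN d → Mat d N → ℝ) (s : EN d) (ξ : Mat d N) : ℝ :=
  Filter.limsup (fun t => freeCell (fun y => g y s) ξ t) Filter.atTop

/-- The open cube of side `t` centered at the origin adapted to the
orthonormal basis `B`. -/
def obCube (B : OrthonormalBasis (Fin N) ℝ (EN N)) (t : ℝ) : Set (EN N) :=
  {x | ∀ i, ⟪x, B i⟫ ∈ Set.Ioo (-(t / 2)) (t / 2)}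

/-- Surface cell infimum at scale `t`: infimum of `t^{1-N} ∫_{tQ_ν} h(y,∇φ)` over
`φ ∈ W^{1,1}(tQ_ν;M)` with `φ = a` on `∂(tQ_ν) ∩ {x·ν₁ > 0}` and `φ = b`
on `∂(tQ_ν) ∩ {x·ν₁ ≤ 0}`. -/
def surfCell (h : EN N → Mat d N → ℝ) (M : Set (EN d)) (a b : EN d) (ν₁ : EN N)
    (B : OrthonormalBasis (Fin N) ℝ (EN N)) (t : ℝ) : ℝ :=
  sInf {c : ℝ | ∃ (φ : EN N → EN d) (Dφ : EN N → Mat d N),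
    MemW11 (obCube B t) φ Dφ ∧ AeIn (obCube B t) φ M ∧
    (∀ x ∈ frontier (obCube B t),
      (0 < ⟪x, ν₁⟫ → φ x = a) ∧ (⟪x, ν₁⟫ ≤ 0 → φ x = b)) ∧
    c = (t ^ (N - 1))⁻¹ * ∫ x in obCube B t, h x (Dφ x)}

/-- Surface cell infimum where moreover the adapted cube is chosen with two of
its faces orthogonal to `ν₁`. -/
def thetaCell (h : EN N → Mat d N → ℝ) (M : Set (EN d)) (a b : EN d) (ν₁ : EN N)
    (t : ℝ) : ℝ :=
  sInf {c : ℝ | ∃ B : OrthonormalBasis (Fin N) ℝ (EN N), (∃ i, B i = ν₁) ∧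
    c = surfCell h M a b ν₁ B t}

/-- The homogenized surface energy density `θ_hom` (built from `f^∞`). -/
def thetaHom (f : EN N → Mat d N → ℝ) (M : Set (EN d)) (a b : EN d) (ν₁ : EN N) : ℝ :=
  Filter.limsup (fun t => thetaCell (fun y => recc (f y)) M a b ν₁ t) Filter.atTop

/-- Strong `L¹(A;ℝ^d)`-convergence of a family `v ε → u` as `ε → 0⁺`. -/
def TendstoL1 (A : Set (EN N)) (v : ℝ → EN N → EN d) (u : EN N → EN d) : Prop :=
  Filter.Tendsto (fun ε => ∫ x in A, ‖v ε x - u x‖) (nhdsWithin 0 (Set.Ioi 0)) (nhds 0)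

/-- Γ-convergence as `ε → 0⁺` of the family `Fε` at the point `u`
(for the strong `L¹(A)`-topology) to the value `c`. -/
def GammaConvergesAt (Fε : ℝ → (EN N → EN d) → ℝ≥0∞) (A : Set (EN N))
    (u : EN N → EN d) (c : ℝ≥0∞) : Prop :=
  (∀ v : ℝ → EN N → EN d, TendstoL1 A v u →
      c ≤ Filter.liminf (fun ε => Fε ε (v ε)) (nhdsWithin 0 (Set.Ioi 0))) ∧
  (∃ v : ℝ → EN N → EN d, TendstoL1 A v u ∧
      Filter.limsup (fun ε => Fε ε (v ε)) (nhdsWithin 0 (Set.Ioi 0)) ≤ c)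

/-- The localized functional `F_ε(u,A) = ∫_A f(x/ε,∇u) dx` if
`u ∈ W^{1,1}(A;M)`, and `+∞` otherwise. -/
def FepsSet (f : EN N → Mat d N → ℝ) (M : Set (EN d)) (ε : ℝ) (u : EN N → EN d)
    (A : Set (EN N)) : ℝ≥0∞ :=
  ⨅ (Du : EN N → Mat d N) (_ : MemW11 A u Du ∧ AeIn A u M),
    ENNReal.ofReal (∫ x in A, f (ε⁻¹ • x) (Du x))

/-- The localized Γ-lower limit
`F(u,A) = inf { liminf_n F_{ε_n}(u_n,A) : u_n → u in L¹(A) }`. -/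
def GammaLow (f : EN N → Mat d N → ℝ) (M : Set (EN d)) (εseq : ℕ → ℝ)
    (u : EN N → EN d) (A : Set (EN N)) : ℝ≥0∞ :=
  ⨅ (v : ℕ → EN N → EN d)
    (_ : Filter.Tendsto (fun n => ∫ x in A, ‖v n x - u x‖) Filter.atTop (nhds 0)),
    Filter.liminf (fun n => FepsSet f M (εseq n) (v n) A) Filter.atTop

/-- Extension of `F(u,·)` to arbitrary sets `B ⊆ Ω` by outer regularity. -/
def GammaLowB (f : EN N → Mat d N → ℝ) (M : Set (EN d)) (εseq : ℕ → ℝ)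
    (u : EN N → EN d) (Ω B : Set (EN N)) : ℝ≥0∞ :=
  ⨅ (A : Set (EN N)) (_ : IsOpen A ∧ A ⊆ Ω ∧ B ⊆ A), GammaLow f M εseq u A

/-- A package certifying `u ∈ BV(Ω;ℝ^d)`, with all its measure-theoretic
attributes: absolutely continuous gradient `grad = ∇u`, approximate
discontinuity (jump) set `S`, traces `up = u⁺`, `um = u⁻`, normal `nu = ν_u`,
approximate limit `ap = ũ`, Cantor part `cm = |D^c u|` with polar density
`cd = dD^cu/d|D^cu|`. -/
structure BVPack (Ω : Set (EN N)) (u : EN N → EN d) where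
  grad : EN N → Mat d N
  S : Set (EN N)
  up : EN N → EN d
  um : EN N → EN d
  nu : EN N → EN N
  ap : EN N → EN d
  cm : Measure (EN N)
  cd : EN N → Mat d N
  integrable : IntegrableOn u Ω volume
  grad_int : IntegrableOn grad Ω volume
  S_meas : MeasurableSet S
  cm_fin : cm Set.univ ≠ ⊤
  cm_in : cm Ωᶜ = 0
  jump_int : IntegrableOn (fun x => ‖up x - um x‖) (Ω ∩ S) (μH[(N : ℝ) - 1])
  nu_unit : ∀ x ∈ S, ‖nu x‖ = 1
  jump_ne : ∀ x ∈ S, up x ≠ um x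
  cd_unit : ∀ᵐ x ∂cm, ‖cd x‖ = 1
  cm_sing : cm ⟂ₘ (volume : Measure (EN N))
  cm_nojump : cm S = 0
  ap_lim : ∀ x ∈ Ω \ S,
    Filter.Tendsto
      (fun r : ℝ => (volume (Metric.ball x r)).toReal⁻¹ *
        ∫ y in Metric.ball x r, ‖u y - ap x‖)
      (nhdsWithin 0 (Set.Ioi 0)) (nhds 0)
  jump_lim_up : ∀ x ∈ Ω ∩ S,
    Filter.Tendsto
      (fun r : ℝ => (volume (Metric.ball x r)).toReal⁻¹ *
        ∫ y in {y ∈ Metric.ball x r | 0 < ⟪y - x, nu x⟫}, ‖u y - up x‖)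
      (nhdsWithin 0 (Set.Ioi 0)) (nhds 0)
  jump_lim_um : ∀ x ∈ Ω ∩ S,
    Filter.Tendsto
      (fun r : ℝ => (volume (Metric.ball x r)).toReal⁻¹ *
        ∫ y in {y ∈ Metric.ball x r | ⟪y - x, nu x⟫ < 0}, ‖u y - um x‖)
      (nhdsWithin 0 (Set.Ioi 0)) (nhds 0)
  decomp : ∀ φ : EN N → ℝ, ContDiff ℝ (⊤ : ℕ∞) φ → HasCompactSupport φ → tsupport φ ⊆ Ω →
    ∀ y : EN N,
      ∫ x in Ω, fderiv ℝ φ x y • u x =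
        -(∫ x in Ω, φ x • grad x y) - (∫ x, φ x • cd x y ∂cm) -
          ∫ x in Ω ∩ S, (⟪nu x, y⟫ * φ x) • (up x - um x) ∂(μH[(N : ℝ) - 1])

/-- The total variation measure `|Du|` associated to a BV package. -/
def totalVar (Ω : Set (EN N)) (u : EN N → EN d) (P : BVPack Ω u) : Measure (EN N) :=
  ((volume.restrict Ω).withDensity fun x => ENNReal.ofReal ‖P.grad x‖) + P.cm +
    ((μH[(N : ℝ) - 1]).restrict (Ω ∩ P.S)).withDensity
      fun x => ENNReal.ofReal ‖P.up x - P.um x‖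

/-- The standing assumptions (Carathéodory, (H1), (H2), (H3)) on the
integrand `f`. -/
structure StdIntegrand (N d : ℕ) (f : EN N → Mat d N → ℝ) (α β L : ℝ) : Prop where
  meas : ∀ ξ : Mat d N, Measurable fun y => f y ξ
  nonneg : ∀ y ξ, 0 ≤ f y ξ
  periodic : ∀ (y : EN N) (ξ : Mat d N) (i : Fin N),
    f (y + EuclideanSpace.single i 1) ξ = f y ξ
  alpha_pos : 0 < α
  alpha_le_beta : α ≤ β
  growth : ∀ᵐ y ∂(volume : Measure (EN N)), ∀ ξ,
    α * ‖ξ‖ ≤ f y ξ ∧ f y ξ ≤ β * (1 + ‖ξ‖)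
  lip_pos : 0 < L
  lip : ∀ᵐ y ∂(volume : Measure (EN N)), ∀ ξ ξ', |f y ξ - f y ξ'| ≤ L * ‖ξ - ξ'‖

/-- Hypothesis (H4): `|f(y,ξ) - f^∞(y,ξ)| ≤ C(1+|ξ|^{1-q})`. -/
def H4 (f : EN N → Mat d N → ℝ) (C q : ℝ) : Prop :=
  0 < C ∧ 0 < q ∧ q < 1 ∧
    ∀ᵐ y ∂(volume : Measure (EN N)), ∀ ξ,
      |f y ξ - recc (f y) ξ| ≤ C * (1 + ‖ξ‖ ^ (1 - q))

/-- The projection data used to build the modified integrand `g`: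
`pr` is the nearest-point projection onto `M` on a `δ₀`-neighborhood,
`tanProj s` is the orthogonal projection of `ℝ^d` onto `T_s M` (for `s ∈ M`),
and `chi` is the smooth cut-off. -/
structure ProjData {d : ℕ} (M : Set (EN d)) where
  δ₀ : ℝ
  pr : EN d → EN d
  chi : EN d → ℝ
  tanProj : EN d → EN d →L[ℝ] EN d
  δ₀_pos : 0 < δ₀
  pr_mem : ∀ s, Metric.infDist s M < δ₀ → pr s ∈ M
  pr_nearest : ∀ s, Metric.infDist s M < δ₀ → ‖s - pr s‖ = Metric.infDist s M
  pr_lip : ∃ K : ℝ≥0, LipschitzOnWith K pr {s | Metric.infDist s M < δ₀}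
  tanProj_lip : ∃ K : ℝ≥0,
    LipschitzOnWith K (fun s => tanProj (pr s)) {s | Metric.infDist s M < δ₀}
  chi_smooth : ContDiff ℝ (⊤ : ℕ∞) chi
  chi_supp : HasCompactSupport chi
  chi_range : ∀ s, chi s ∈ Set.Icc (0 : ℝ) 1
  chi_one : ∀ s, Metric.infDist s M ≤ δ₀ / 2 → chi s = 1
  chi_zero : ∀ s, 3 * δ₀ / 4 ≤ Metric.infDist s M → chi s = 0
  tanProj_mem : ∀ s ∈ M, ∀ v, tanProj s v ∈ TangentSet M s
  tanProj_id : ∀ s ∈ M, ∀ v ∈ TangentSet M s, tanProj s v = v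
  tanProj_symm : ∀ s ∈ M, ∀ v w, ⟪tanProj s v, w⟫ = ⟪v, tanProj s w⟫

/-- The cut-off tangential projection `ℙ_s(ξ) = χ(s) P_{Π(s)} ∘ ξ`. -/
def tanP {M : Set (EN d)} (D : ProjData M) (s : EN d) (ξ : Mat d N) : Mat d N :=
  D.chi s • ((D.tanProj (D.pr s)).comp ξ)

/-- The modified integrand `g(y,s,ξ) = f(y,ℙ_s(ξ)) + |ξ - ℙ_s(ξ)|`. -/
def gOf {M : Set (EN d)} (D : ProjData M) (f : EN N → Mat d N → ℝ) :
    EN N → EN d → Mat d N → ℝ :=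
  fun y s ξ => f y (tanP D s ξ) + ‖ξ - tanP D s ξ‖

/-- The geodesic distance on `M`. -/
def geoDist (M : Set (EN d)) (a b : EN d) : ℝ :=
  sInf {l : ℝ | ∃ γ : ℝ → EN d, ContDiff ℝ (⊤ : ℕ∞) γ ∧ (∀ t, γ t ∈ M) ∧
    γ 0 = b ∧ γ 1 = a ∧ l = ∫ t in Set.Icc (0 : ℝ) 1, ‖deriv γ t‖}

/-- The class `G(a,b)` of geodesic curves between `a` and `b`. -/
def GeodClass (M : Set (EN d)) (a b : EN d) : Set (ℝ → EN d) :=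
  {γ | ContDiff ℝ (⊤ : ℕ∞) γ ∧ (∀ t, γ t ∈ M) ∧ (∀ t : ℝ, 1 / 2 ≤ t → γ t = a) ∧
    (∀ t : ℝ, t ≤ -(1 / 2 : ℝ) → γ t = b) ∧
    (∫ t : ℝ, ‖deriv γ t‖) = geoDist M a b}

/-- `I_ε(a,b,ν)`: infimum of `∫_{Q_ν} h(x/ε,∇u)` over the geodesic-boundary
class `B_ε(a,b,ν)`. -/
def Ieps (h : EN N → Mat d N → ℝ) (M : Set (EN d)) (a b : EN d) (ν₁ : EN N)
    (B : OrthonormalBasis (Fin N) ℝ (EN N)) (ε : ℝ) : ℝ :=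
  sInf {c : ℝ | ∃ (φ : EN N → EN d) (Dφ : EN N → Mat d N) (γ : ℝ → EN d),
    γ ∈ GeodClass M a b ∧ MemW11 (obCube B 1) φ Dφ ∧ AeIn (obCube B 1) φ M ∧
    (∀ x ∈ frontier (obCube B 1), φ x = γ (⟪x, ν₁⟫ / ε)) ∧
    c = ∫ x in obCube B 1, h (ε⁻¹ • x) (Dφ x)}

/-- `J_ε(a,b,ν)`: infimum of `∫_{Q_ν} h(x/ε,∇u)` with sharp-interface boundary
datum `u_{a,b,ν}`. -/
def Jeps (h : EN N → Mat d N → ℝ) (M : Set (EN d)) (a b : EN d) (ν₁ : EN N)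
    (B : OrthonormalBasis (Fin N) ℝ (EN N)) (ε : ℝ) : ℝ :=
  sInf {c : ℝ | ∃ (φ : EN N → EN d) (Dφ : EN N → Mat d N),
    MemW11 (obCube B 1) φ Dφ ∧ AeIn (obCube B 1) φ M ∧
    (∀ x ∈ frontier (obCube B 1),
      (0 < ⟪x, ν₁⟫ → φ x = a) ∧ (⟪x, ν₁⟫ ≤ 0 → φ x = b)) ∧
    c = ∫ x in obCube B 1, h (ε⁻¹ • x) (Dφ x)}

/-- The defining properties of the interfacial density `K` from the integral
representation on partitions. -/
def IsJumpRepr (Ω : Set (EN N)) (f : EN N → Mat d N → ℝ) (M : Set (EN d))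
    (εseq : ℕ → ℝ) (K : EN d → EN d → EN N → ℝ) : Prop :=
  (∀ a ∈ M, ∀ b ∈ M, ∀ ν₁ : EN N, ‖ν₁‖ = 1 → 0 ≤ K a b ν₁) ∧
  (∀ a ∈ M, ∀ b ∈ M, ContinuousOn (K a b) (Metric.sphere (0 : EN N) 1)) ∧
  (∀ a ∈ M, ∀ b ∈ M, ∀ ν₁ : EN N, ‖ν₁‖ = 1 → K a b ν₁ = K b a (-ν₁)) ∧
  (∀ T : Finset (EN d), (T : Set (EN d)) ⊆ M →
    ∀ (u : EN N → EN d) (P : BVPack Ω u),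
      (∀ᵐ x ∂(volume.restrict Ω), u x ∈ (T : Set (EN d))) →
      ∀ S : Set (EN N), MeasurableSet S → S ⊆ Ω ∩ P.S →
        GammaLowB f M εseq u Ω S =
          ENNReal.ofReal
            (∫ x in S, K (P.up x) (P.um x) (P.nu x) ∂(μH[(N : ℝ) - 1])))

end

/-! ### Auxiliary material for the proof -/

namespace Aux7

/-- The closed cube. -/
def closedCube (N : ℕ) (t : ℝ) : Set (EN N) := {x | ∀ i, x i ∈ Set.Icc (0 : ℝ) t}

lemma posCube_eq (N : ℕ) (t : ℝ) :
    posCube N t = (@WithLp.ofLp 2 (Fin N → ℝ)) ⁻¹' (Set.pi univ fun _ => Set.Ioo (0 : ℝ) t) := by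
  ext x; simp [posCube]

lemma closedCube_eq (N : ℕ) (t : ℝ) :
    closedCube N t =
      (@WithLp.ofLp 2 (Fin N → ℝ)) ⁻¹' (Set.Icc (fun _ => (0 : ℝ)) (fun _ => t)) := by
  ext x; simp [closedCube, Pi.le_def, forall_and]

lemma isCompact_closedCube (N : ℕ) (t : ℝ) : IsCompact (closedCube N t) := by
  rw [closedCube_eq]
  exact (EuclideanSpace.equiv (Fin N) ℝ).toHomeomorph.isCompact_preimage.2 isCompact_Icc

lemma measurableSet_posCube (N : ℕ) (t : ℝ) : MeasurableSet (posCube N t) := by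
  rw [posCube_eq]
  exact (PiLp.volume_preserving_ofLp (Fin N)).measurable
    (MeasurableSet.univ_pi fun _ => measurableSet_Ioo)

lemma posCube_ae_eq (N : ℕ) (t : ℝ) :
    (posCube N t : Set (EN N)) =ᵐ[volume] closedCube N t := by
  rw [posCube_eq, closedCube_eq]
  exact (PiLp.volume_preserving_ofLp (Fin N)).quasiMeasurePreserving.preimage_ae_eq
    Measure.univ_pi_Ioo_ae_eq_Icc

lemma volume_posCube (N : ℕ) (t : ℝ) :
    volume (posCube N t) = ENNReal.ofReal t ^ N := by
  rw [posCube_eq, (PiLp.volume_preserving_ofLp (Fin N)).measure_preimage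
    (MeasurableSet.univ_pi fun _ => measurableSet_Ioo).nullMeasurableSet]
  simp [Real.volume_pi_Ioo]

lemma volume_real_posCube (N : ℕ) {t : ℝ} (ht : 0 < t) :
    volume.real (posCube N t) = t ^ N := by
  simp [Measure.real, volume_posCube, ENNReal.toReal_pow, ENNReal.toReal_ofReal ht.le]

lemma volume_posCube_lt (N : ℕ) (t : ℝ) : volume (posCube N t) < ⊤ := by
  rw [volume_posCube]; exact ENNReal.pow_lt_top ENNReal.ofReal_lt_top

lemma integrable_fderiv {N d : ℕ} {φ : EN N → EN d} {K : ℝ≥0} (hφ : LipschitzWith K φ) (t : ℝ) :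
    IntegrableOn (fderiv ℝ φ) (posCube N t) volume := by
  refine Measure.integrableOn_of_bounded (M := K) (volume_posCube_lt N t).ne
    (measurable_fderiv ℝ φ).aestronglyMeasurable ?_
  exact Eventually.of_forall fun x => norm_fderiv_le_of_lipschitz ℝ hφ

lemma integral_fderiv {N d : ℕ} {φ : EN N → EN d} {K : ℝ≥0} (hφ : LipschitzWith K φ) (t : ℝ)
    (h0 : ∀ x, x ∉ posCube N t → φ x = 0) :
    ∫ x in posCube N t, fderiv ℝ φ x = 0 := by
  have hsub : posCube N t ⊆ closedCube N t := fun x hx i => ⟨(hx i).1.le, (hx i).2.le⟩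
  have hts : tsupport φ ⊆ closedCube N t := by
    refine closure_minimal ?_ (isCompact_closedCube N t).isClosed
    intro x hx
    by_contra hc
    exact hx (h0 x fun h => hc (hsub h))
  have hcs : HasCompactSupport φ := (isCompact_closedCube N t).of_isClosed_subset
    (isClosed_tsupport _) hts
  ext v i
  let T : Mat d N →L[ℝ] ℝ :=
    (EuclideanSpace.proj i : EN d →L[ℝ] ℝ).comp (ContinuousLinearMap.apply ℝ (EN d) v)
  have hT : ∀ A : Mat d N, T A = (A v) i := fun A => rfl
  rw [← hT, ← ContinuousLinearMap.integral_comp_comm T (integrable_fderiv hφ t)]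
  rw [setIntegral_congr_set (posCube_ae_eq N t), setIntegral_eq_integral_of_forall_compl_eq_zero]
  swap
  · intro x hx
    have : fderiv ℝ φ x = 0 := by
      by_contra hne
      exact hx (hts (support_fderiv_subset ℝ hne))
    simp [this]
  have hlip : LipschitzWith K (fun x => φ x i) := by
    have h1 : LipschitzWith 1 (fun y : EN d => y i) := by
      refine LipschitzWith.of_dist_le_mul fun x y => ?_
      simpa [dist_eq_norm] using PiLp.norm_apply_le (x - y) i
    have h2 := h1.comp hφ
    rw [one_mul] at h2
    exact h2
  have hcs' : HasCompactSupport (fun x => φ x i) :=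
    hcs.comp_left (g := fun y : EN d => y i) (by simp)
  have key := LipschitzWith.integral_lineDeriv_mul_eq (μ := (volume : Measure (EN N)))
    (f := fun _ => (1 : ℝ)) (LipschitzWith.const 1) hlip hcs' (-v)
  have e1 : ∀ x, lineDeriv ℝ (fun _ : EN N => (1 : ℝ)) x (-v) = 0 := by
    intro x; simp [lineDeriv]
  simp only [e1, zero_mul, integral_zero, neg_neg, mul_one] at key
  have e2 : (fun x => T (fderiv ℝ φ x)) =ᵐ[volume] fun x => lineDeriv ℝ (fun x => φ x i) x v := by
    filter_upwards [hφ.ae_differentiableAt] with x hx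
    have : HasFDerivAt (fun x => φ x i)
        ((EuclideanSpace.proj i : EN d →L[ℝ] ℝ).comp (fderiv ℝ φ x)) x :=
      (EuclideanSpace.proj i : EN d →L[ℝ] ℝ).hasFDerivAt.comp x hx.hasFDerivAt
    rw [this.hasLineDerivAt v |>.lineDeriv]
    rfl
  rw [integral_congr_ae e2, ← key]
  simp

/-- Integrands with linear growth, Lipschitz in the second variable. -/
structure Good {N d : ℕ} (h : EN N → Mat d N → ℝ) (a b L : ℝ) : Prop where
  meas : ∀ ξ : Mat d N, Measurable fun y => h y ξ
  a_pos : 0 < a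
  b_nonneg : 0 ≤ b
  growth : ∀ᵐ y ∂(volume : Measure (EN N)), ∀ ξ, a * ‖ξ‖ ≤ h y ξ ∧ h y ξ ≤ b * (1 + ‖ξ‖)
  lip_pos : 0 ≤ L
  lip : ∀ᵐ y ∂(volume : Measure (EN N)), ∀ ξ ξ', |h y ξ - h y ξ'| ≤ L * ‖ξ - ξ'‖

variable {N d : ℕ} {h h' : EN N → Mat d N → ℝ} {a b L : ℝ}

lemma Good.aemeas (hh : Good h a b L) {Φ : EN N → Mat d N} (hΦ : Measurable Φ) :
    AEStronglyMeasurable (fun x => h x (Φ x)) volume := by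
  obtain ⟨A, hA, hAm, hA0⟩ := exists_measurable_superset_of_null hh.lip
  classical
  let u : Mat d N → EN N → ℝ := fun ξ y => if y ∈ A then 0 else h y ξ
  have hu1 : ∀ y, Continuous fun ξ => u ξ y := by
    intro y
    by_cases hy : y ∈ A
    · simp [u, hy, continuous_const]
    · have hy' : ∀ ξ ξ', |h y ξ - h y ξ'| ≤ L * ‖ξ - ξ'‖ := by
        by_contra hc; exact hy (hA hc)
      simp only [u, hy, if_false]
      exact (LipschitzWith.of_dist_le_mul (K := ⟨L, hh.lip_pos⟩) fun ξ ξ' => by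
        rw [Real.dist_eq, dist_eq_norm]; exact hy' ξ ξ').continuous
  have hu2 : ∀ ξ, Measurable (u ξ) := fun ξ => Measurable.ite hAm measurable_const (hh.meas ξ)
  have hm := measurable_uncurry_of_continuous_of_measurable hu1 hu2
  have hm2 : Measurable fun x => u (Φ x) x := hm.comp (hΦ.prodMk measurable_id)
  refine ⟨_, hm2.stronglyMeasurable, ?_⟩
  have : ∀ᵐ x ∂(volume : Measure (EN N)), x ∉ A := measure_eq_zero_iff_ae_notMem.1 hA0
  filter_upwards [this] with x hx
  simp [u, hx]

lemma Good.integrable (hh : Good h a b L) {φ : EN N → EN d} {K : ℝ≥0} (hφ : LipschitzWith K φ)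
    (ξ : Mat d N) (t : ℝ) :
    IntegrableOn (fun x => h x (ξ + fderiv ℝ φ x)) (posCube N t) volume := by
  refine Measure.integrableOn_of_bounded (M := b * (1 + (‖ξ‖ + K))) (volume_posCube_lt N t).ne
    (hh.aemeas ((measurable_fderiv ℝ φ).const_add ξ)) ?_
  refine ae_restrict_of_ae ?_
  filter_upwards [hh.growth] with x hx
  obtain ⟨h1, h2⟩ := hx (ξ + fderiv ℝ φ x)
  have h3 : ‖ξ + fderiv ℝ φ x‖ ≤ ‖ξ‖ + K :=
    (norm_add_le _ _).trans (add_le_add le_rfl (norm_fderiv_le_of_lipschitz ℝ hφ))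
  rw [Real.norm_eq_abs, abs_of_nonneg (le_trans (mul_nonneg hh.a_pos.le (norm_nonneg _)) h1)]
  exact h2.trans (mul_le_mul_of_nonneg_left (by linarith) hh.b_nonneg)

lemma integrable_grad {φ : EN N → EN d} {K : ℝ≥0} (hφ : LipschitzWith K φ)
    (ξ : Mat d N) (t : ℝ) :
    IntegrableOn (fun x => ξ + fderiv ℝ φ x) (posCube N t) volume :=
  Integrable.add (f := fun _ => ξ) (integrableOn_const (C := ξ) (volume_posCube_lt N t).ne)
    (integrable_fderiv hφ t)

/-- energy -/
noncomputable def en (h : EN N → Mat d N → ℝ) (ξ : Mat d N) (t : ℝ) (φ : EN N → EN d) : ℝ :=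
  (t ^ N)⁻¹ * ∫ x in posCube N t, h x (ξ + fderiv ℝ φ x)

/-- set of energies -/
def cellSet (h : EN N → Mat d N → ℝ) (S : Set (EN d)) (ξ : Mat d N) (t : ℝ) : Set ℝ :=
  {c : ℝ | ∃ (φ : EN N → EN d) (K : ℝ≥0), LipschitzWith K φ ∧
    (∀ x, φ x ∈ S) ∧ (∀ x, x ∉ posCube N t → φ x = 0) ∧ c = en h ξ t φ}

lemma Good.en_grad_le (hh : Good h a b L) {φ : EN N → EN d} {K : ℝ≥0} (hφ : LipschitzWith K φ)
    (ξ : Mat d N) {t : ℝ} (ht : 0 < t) :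
    a * en (fun _ η => ‖η‖) ξ t φ ≤ en h ξ t φ := by
  unfold en
  rw [mul_left_comm, ← integral_const_mul]
  refine mul_le_mul_of_nonneg_left ?_ (by positivity)
  refine setIntegral_mono_ae ((integrable_grad hφ ξ t).norm.const_mul a) (hh.integrable hφ ξ t) ?_
  filter_upwards [hh.growth] with x hx using (hx _).1

lemma norm_le_en {φ : EN N → EN d} {K : ℝ≥0} (hφ : LipschitzWith K φ)
    (ξ : Mat d N) {t : ℝ} (ht : 0 < t) (h0 : ∀ x, x ∉ posCube N t → φ x = 0) :
    ‖ξ‖ ≤ en (fun _ η => ‖η‖) ξ t φ := by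
  have hI : ∫ x in posCube N t, (ξ + fderiv ℝ φ x) = (t ^ N) • ξ := by
    rw [integral_add (f := fun _ => ξ) (integrableOn_const (C := ξ) (volume_posCube_lt N t).ne)
        (integrable_fderiv hφ t),
      integral_fderiv hφ t h0, setIntegral_const, volume_real_posCube N ht, add_zero]
  have h2 := norm_integral_le_integral_norm (μ := volume.restrict (posCube N t))
    (fun x => ξ + fderiv ℝ φ x)
  rw [hI, norm_smul, Real.norm_of_nonneg (by positivity)] at h2
  unfold en
  rw [inv_mul_eq_div, le_div_iff₀ (by positivity)]
  linarith

lemma Good.lower (hh : Good h a b L) {S : Set (EN d)} (ξ : Mat d N) {t : ℝ} (ht : 0 < t)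
    {c : ℝ} (hc : c ∈ cellSet h S ξ t) : a * ‖ξ‖ ≤ c := by
  obtain ⟨φ, K, hφ, -, h0, rfl⟩ := hc
  exact (mul_le_mul_of_nonneg_left (norm_le_en hφ ξ ht h0) hh.a_pos.le).trans
    (hh.en_grad_le hφ ξ ht)

lemma Good.bddBelow (hh : Good h a b L) (S : Set (EN d)) (ξ : Mat d N) {t : ℝ} (ht : 0 < t) :
    BddBelow (cellSet h S ξ t) := ⟨_, fun _ hc => hh.lower ξ ht hc⟩

lemma zero_mem_cellSet {S : Set (EN d)} (hS : (0 : EN d) ∈ S) (ξ : Mat d N) (t : ℝ) :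
    en h ξ t 0 ∈ cellSet h S ξ t :=
  ⟨0, 0, LipschitzWith.const 0, fun _ => hS, fun _ _ => rfl, rfl⟩

lemma Good.cell_bounds (hh : Good h a b L) {S : Set (EN d)} (hS : (0 : EN d) ∈ S)
    (ξ : Mat d N) {t : ℝ} (ht : 0 < t) :
    a * ‖ξ‖ ≤ sInf (cellSet h S ξ t) ∧ sInf (cellSet h S ξ t) ≤ b * (1 + ‖ξ‖) := by
  refine ⟨le_csInf ⟨_, zero_mem_cellSet hS ξ t⟩ fun c hc => hh.lower ξ ht hc,
    (csInf_le (hh.bddBelow S ξ ht) (zero_mem_cellSet hS ξ t)).trans ?_⟩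
  unfold en
  have h1 : ∫ x in posCube N t, h x (ξ + fderiv ℝ (0 : EN N → EN d) x) ≤
      ∫ x in posCube N t, b * (1 + ‖ξ‖) := by
    refine setIntegral_mono_ae (hh.integrable (K := 0) (LipschitzWith.const 0) ξ t)
      (integrableOn_const (volume_posCube_lt N t).ne) ?_
    filter_upwards [hh.growth] with x hx
    simpa using (hx ξ).2
  rw [setIntegral_const, volume_real_posCube N ht, smul_eq_mul] at h1
  rw [inv_mul_eq_div, div_le_iff₀ (by positivity)]
  linarith

/-- Comparison of two cell problems. -/
lemma sInf_le_of_en {S : Set (EN d)} (hS : (0 : EN d) ∈ S) {ξ ξ' : Mat d N} {t p q : ℝ}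
    (hb : BddBelow (cellSet h S ξ t))
    (H : ∀ (φ : EN N → EN d) (K : ℝ≥0), LipschitzWith K φ →
      en h ξ t φ ≤ p * en h' ξ' t φ + q) (hp' : 0 < p) :
    sInf (cellSet h S ξ t) ≤ p * sInf (cellSet h' S ξ' t) + q := by
  have : (sInf (cellSet h S ξ t) - q) / p ≤ sInf (cellSet h' S ξ' t) := by
    refine le_csInf ⟨_, zero_mem_cellSet hS ξ' t⟩ ?_
    rintro c ⟨φ, K, hφ, hφS, h0, rfl⟩
    rw [div_le_iff₀ hp']
    have h1 := csInf_le hb ⟨φ, K, hφ, hφS, h0, rfl⟩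
    have h2 := H φ K hφ
    linarith
  rw [div_le_iff₀ hp'] at this
  linarith

lemma Good.lip_xi (hh : Good h a b L) {S : Set (EN d)} (hS : (0 : EN d) ∈ S)
    (ξ ξ' : Mat d N) {t : ℝ} (ht : 0 < t) :
    sInf (cellSet h S ξ t) ≤ sInf (cellSet h S ξ' t) + L * ‖ξ - ξ'‖ := by
  have := sInf_le_of_en (h := h) (h' := h) hS (ξ := ξ) (ξ' := ξ') (t := t) (p := 1)
    (q := L * ‖ξ - ξ'‖) (hh.bddBelow S ξ ht) ?_ one_pos
  · simpa using this
  intro φ K hφ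
  unfold en
  have h1 : ∫ x in posCube N t, h x (ξ + fderiv ℝ φ x) ≤
      ∫ x in posCube N t, (h x (ξ' + fderiv ℝ φ x) + L * ‖ξ - ξ'‖) := by
    refine setIntegral_mono_ae (hh.integrable hφ ξ t)
      ((hh.integrable hφ ξ' t).add (integrableOn_const (volume_posCube_lt N t).ne)) ?_
    filter_upwards [hh.lip] with x hx
    have := (abs_le.1 (hx (ξ + fderiv ℝ φ x) (ξ' + fderiv ℝ φ x))).2
    rw [add_sub_add_right_eq_sub] at this
    linarith
  rw [integral_add (hh.integrable hφ ξ' t) (integrableOn_const (volume_posCube_lt N t).ne),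
    setIntegral_const, volume_real_posCube N ht, smul_eq_mul] at h1
  have h2 := mul_le_mul_of_nonneg_left h1 (show 0 ≤ (t ^ N)⁻¹ by positivity)
  rw [mul_add, inv_mul_cancel_left₀ (by positivity)] at h2
  linarith

lemma Good.compare (hh : Good h a b L) (hh' : Good h' a b L) {S : Set (EN d)}
    (hS : (0 : EN d) ∈ S) {κ : ℝ} (hκ : 0 ≤ κ)
    (hc : ∀ᵐ y ∂(volume : Measure (EN N)), ∀ η, |h y η - h' y η| ≤ κ * ‖η‖)
    (ξ : Mat d N) {t : ℝ} (ht : 0 < t) :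
    sInf (cellSet h S ξ t) ≤ sInf (cellSet h' S ξ t) + κ / a * (b * (1 + ‖ξ‖)) := by
  have ha := hh.a_pos
  have hk : 0 ≤ κ / a := by positivity
  have := sInf_le_of_en (h := h) (h' := h') hS (ξ := ξ) (ξ' := ξ) (t := t) (p := 1 + κ / a)
    (q := 0) (hh.bddBelow S ξ ht) ?_ (by positivity)
  · have h2 := mul_le_mul_of_nonneg_left (hh'.cell_bounds hS ξ ht).2 hk
    linarith
  intro φ K hφ
  have h1 : ∫ x in posCube N t, h x (ξ + fderiv ℝ φ x) ≤
      ∫ x in posCube N t, (h' x (ξ + fderiv ℝ φ x) + κ * ‖ξ + fderiv ℝ φ x‖) := by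
    refine setIntegral_mono_ae (hh.integrable hφ ξ t)
      ((hh'.integrable hφ ξ t).add ((integrable_grad hφ ξ t).norm.const_mul κ)) ?_
    filter_upwards [hc] with x hx
    have := (abs_le.1 (hx (ξ + fderiv ℝ φ x))).2
    linarith
  rw [integral_add (hh'.integrable hφ ξ t) ((integrable_grad hφ ξ t).norm.const_mul κ),
    integral_const_mul] at h1
  have h2 := mul_le_mul_of_nonneg_left h1 (show 0 ≤ (t ^ N)⁻¹ by positivity)
  have h3 := mul_le_mul_of_nonneg_left (hh'.en_grad_le hφ ξ ht) hk
  have h4 : κ / a * (a * en (fun _ η => ‖η‖) ξ t φ) = κ * en (fun _ η => ‖η‖) ξ t φ := by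
    field_simp
  rw [h4] at h3
  unfold en at h3 ⊢
  linarith

/-- limsup of cells -/
noncomputable def lim (h : EN N → Mat d N → ℝ) (S : Set (EN d)) (ξ : Mat d N) : ℝ :=
  Filter.limsup (fun t => sInf (cellSet h S ξ t)) Filter.atTop

lemma Good.bdd (hh : Good h a b L) {S : Set (EN d)} (hS : (0 : EN d) ∈ S) (ξ : Mat d N) :
    IsBoundedUnder (· ≤ ·) atTop (fun t => sInf (cellSet h S ξ t)) :=
  ⟨b * (1 + ‖ξ‖), by
    rw [eventually_map]
    filter_upwards [eventually_gt_atTop 0] with t ht using (hh.cell_bounds hS ξ ht).2⟩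

lemma Good.cobdd (hh : Good h a b L) {S : Set (EN d)} (hS : (0 : EN d) ∈ S) (ξ : Mat d N) :
    IsCoboundedUnder (· ≤ ·) atTop (fun t => sInf (cellSet h S ξ t)) :=
  IsBoundedUnder.isCoboundedUnder_le ⟨a * ‖ξ‖, by
    rw [eventually_map]
    filter_upwards [eventually_gt_atTop 0] with t ht using (hh.cell_bounds hS ξ ht).1⟩

lemma Good.lim_bounds (hh : Good h a b L) {S : Set (EN d)} (hS : (0 : EN d) ∈ S) (ξ : Mat d N) :
    a * ‖ξ‖ ≤ lim h S ξ ∧ lim h S ξ ≤ b * (1 + ‖ξ‖) := by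
  constructor
  · refine le_limsup_of_frequently_le (Eventually.frequently ?_) (hh.bdd hS ξ)
    filter_upwards [eventually_gt_atTop 0] with t ht using (hh.cell_bounds hS ξ ht).1
  · refine limsup_le_of_le (hh.cobdd hS ξ) ?_
    filter_upwards [eventually_gt_atTop 0] with t ht using (hh.cell_bounds hS ξ ht).2

lemma lim_le (hh : Good h a b L) (hh' : Good h' a b L) {S : Set (EN d)}
    (hS : (0 : EN d) ∈ S) {ξ ξ' : Mat d N} {q : ℝ}
    (H : ∀ t, 0 < t → sInf (cellSet h S ξ t) ≤ sInf (cellSet h' S ξ' t) + q) :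
    lim h S ξ ≤ lim h' S ξ' + q := by
  unfold lim
  rw [← limsup_add_const atTop _ q (hh'.bdd hS ξ') (hh'.cobdd hS ξ')]
  refine limsup_le_limsup ?_ (hh.cobdd hS ξ) ?_
  · filter_upwards [eventually_gt_atTop 0] with t ht using H t ht
  · refine ⟨b * (1 + ‖ξ'‖) + q, ?_⟩
    rw [eventually_map]
    filter_upwards [eventually_gt_atTop 0] with t ht
    linarith [(hh'.cell_bounds hS ξ' ht).2]

lemma Good.lim_lip (hh : Good h a b L) {S : Set (EN d)} (hS : (0 : EN d) ∈ S) (ξ ξ' : Mat d N) :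
    |lim h S ξ - lim h S ξ'| ≤ L * ‖ξ - ξ'‖ := by
  have h1 := lim_le hh hh hS (fun t ht => hh.lip_xi hS ξ ξ' ht)
  have h2 := lim_le hh hh hS (fun t ht => hh.lip_xi hS ξ' ξ ht)
  rw [norm_sub_rev ξ' ξ] at h2
  rw [abs_le]; constructor <;> linarith

lemma Good.lim_compare (hh : Good h a b L) (hh' : Good h' a b L) {S : Set (EN d)}
    (hS : (0 : EN d) ∈ S) {κ : ℝ} (hκ : 0 ≤ κ)
    (hc : ∀ᵐ y ∂(volume : Measure (EN N)), ∀ η, |h y η - h' y η| ≤ κ * ‖η‖) (ξ : Mat d N) :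
    |lim h S ξ - lim h' S ξ| ≤ κ / a * (b * (1 + ‖ξ‖)) := by
  have h1 := lim_le hh hh' hS (fun t ht => hh.compare hh' hS hκ hc ξ ht)
  have h2 := lim_le hh' hh hS (fun t ht => hh'.compare hh hS hκ
    (by simpa only [abs_sub_comm] using hc) ξ ht)
  rw [abs_le]; constructor <;> linarith

lemma Tfhom_eq (f : EN N → Mat d N → ℝ) (M : Set (EN d)) (s : EN d) (ξ : Mat d N) :
    Tfhom f M s ξ = lim f (TangentSet M s) ξ := rfl

lemma ghomOf_eq (g : EN N → EN d → Mat d N → ℝ) (s : EN d) (ξ : Mat d N) :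
    ghomOf g s ξ = lim (fun y => g y s) univ ξ := by
  simp [ghomOf, lim, freeCell, cellSet, en]

/-! projection part -/

/-- the cut-off projection -/
noncomputable def Q {M : Set (EN d)} (D : ProjData M) (s : EN d) : EN d →L[ℝ] EN d :=
  D.chi s • D.tanProj (D.pr s)

lemma norm_tanProj_le {M : Set (EN d)} (D : ProjData M) {s : EN d} (hs : s ∈ M) :
    ‖D.tanProj s‖ ≤ 1 := by
  refine ContinuousLinearMap.opNorm_le_bound _ zero_le_one fun v => ?_
  have h1 : ⟪D.tanProj s v, D.tanProj s v⟫ = ⟪v, D.tanProj s v⟫ := by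
    rw [D.tanProj_symm s hs, D.tanProj_id s hs _ (D.tanProj_mem s hs v)]
  have h2 := real_inner_le_norm v (D.tanProj s v)
  rw [← h1, real_inner_self_eq_norm_sq] at h2
  rcases (norm_nonneg (D.tanProj s v)).eq_or_lt with h3 | h3
  · rw [← h3]; positivity
  · nlinarith

lemma chi_zero' {M : Set (EN d)} (D : ProjData M) {s : EN d}
    (hs : ¬ Metric.infDist s M < D.δ₀) : D.chi s = 0 :=
  D.chi_zero s (by have := D.δ₀_pos; linarith)

lemma norm_Q_le_chi {M : Set (EN d)} (D : ProjData M) (s : EN d) : ‖Q D s‖ ≤ D.chi s := by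
  unfold Q
  by_cases hs : Metric.infDist s M < D.δ₀
  · rw [norm_smul, Real.norm_of_nonneg (D.chi_range s).1]
    exact mul_le_of_le_one_right (D.chi_range s).1 (norm_tanProj_le D (D.pr_mem s hs))
  · rw [chi_zero' D hs, zero_smul ℝ (D.tanProj (D.pr s)), norm_zero]

lemma norm_Q_le {M : Set (EN d)} (D : ProjData M) (s : EN d) : ‖Q D s‖ ≤ 1 :=
  (norm_Q_le_chi D s).trans (D.chi_range s).2

lemma Q_lip {M : Set (EN d)} (D : ProjData M) :
    ∃ K : ℝ, 0 ≤ K ∧ ∀ s s', ‖Q D s - Q D s'‖ ≤ K * ‖s - s'‖ := by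
  obtain ⟨K₁, hK₁⟩ := ContDiff.lipschitzWith_of_hasCompactSupport D.chi_supp D.chi_smooth (by simp)
  obtain ⟨K₂, hK₂⟩ := D.tanProj_lip
  have hchi : ∀ s s', |D.chi s - D.chi s'| ≤ K₁ * ‖s - s'‖ := fun s s' => by
    simpa [Real.dist_eq, dist_eq_norm] using hK₁.dist_le_mul s s'
  have hout : ∀ s s', ¬ Metric.infDist s' M < D.δ₀ →
      ‖Q D s - Q D s'‖ ≤ (K₁ + K₂) * ‖s - s'‖ := by
    intro s s' hs'
    have h0 : Q D s' = 0 := by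
      rw [Q, chi_zero' D hs', zero_smul ℝ (D.tanProj (D.pr s'))]
    have h1 := hchi s s'
    rw [chi_zero' D hs', sub_zero] at h1
    rw [h0, sub_zero]
    have h2 := norm_Q_le_chi D s
    have h3 := le_abs_self (D.chi s)
    have h4 : 0 ≤ (K₂ : ℝ) * ‖s - s'‖ := by positivity
    linarith
  refine ⟨K₁ + K₂, by positivity, fun s s' => ?_⟩
  by_cases hs' : Metric.infDist s' M < D.δ₀
  swap
  · exact hout s s' hs'
  by_cases hs : Metric.infDist s M < D.δ₀
  swap
  · rw [norm_sub_rev, norm_sub_rev s s']; exact hout s' s hs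
  have e : Q D s - Q D s' = (D.chi s - D.chi s') • D.tanProj (D.pr s) +
      D.chi s' • (D.tanProj (D.pr s) - D.tanProj (D.pr s')) := by
    simp only [Q]; module
  rw [e]
  refine (norm_add_le _ _).trans ?_
  rw [norm_smul, norm_smul, Real.norm_eq_abs, Real.norm_of_nonneg (D.chi_range s').1, add_mul]
  have h1 : ‖D.tanProj (D.pr s) - D.tanProj (D.pr s')‖ ≤ K₂ * ‖s - s'‖ := by
    simpa [dist_eq_norm] using hK₂.dist_le_mul s hs s' hs'
  refine add_le_add ?_ ?_
  · exact (mul_le_of_le_one_right (abs_nonneg _)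
      (norm_tanProj_le D (D.pr_mem s hs))).trans (hchi s s')
  · exact (mul_le_of_le_one_left (norm_nonneg _) (D.chi_range s').2).trans h1

lemma tanP_eq {M : Set (EN d)} (D : ProjData M) (s : EN d) (ξ : Mat d N) :
    tanP D s ξ = (Q D s).comp ξ := by
  simp [tanP, Q]

lemma norm_tanP_le {M : Set (EN d)} (D : ProjData M) (s : EN d) (ξ : Mat d N) :
    ‖tanP D s ξ‖ ≤ ‖ξ‖ := by
  rw [tanP_eq]
  exact (ContinuousLinearMap.opNorm_comp_le _ _).trans
    (mul_le_of_le_one_left (norm_nonneg _) (norm_Q_le D s))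

lemma tanP_sub {M : Set (EN d)} (D : ProjData M) (s : EN d) (ξ ξ' : Mat d N) :
    tanP D s ξ - tanP D s ξ' = tanP D s (ξ - ξ') := by
  simp only [tanP_eq, ContinuousLinearMap.comp_sub]

lemma good_f {f : EN N → Mat d N → ℝ} {α β L : ℝ} (hf : StdIntegrand N d f α β L) :
    Good f α β L :=
  ⟨hf.meas, hf.alpha_pos, hf.alpha_pos.le.trans hf.alpha_le_beta, hf.growth, hf.lip_pos.le, hf.lip⟩

lemma good_g {f : EN N → Mat d N → ℝ} {α β L : ℝ} (hf : StdIntegrand N d f α β L)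
    {M : Set (EN d)} (D : ProjData M) (s : EN d) :
    Good (fun y => gOf D f y s) (min α 1) (β + 2) (L + 2) where
  meas ξ := (hf.meas _).add_const _
  a_pos := lt_min hf.alpha_pos one_pos
  b_nonneg := by have := hf.alpha_pos; have := hf.alpha_le_beta; linarith
  lip_pos := by have := hf.lip_pos; linarith
  growth := by
    have hβ : 0 ≤ β := hf.alpha_pos.le.trans hf.alpha_le_beta
    filter_upwards [hf.growth] with y hy ξ
    obtain ⟨h1, h2⟩ := hy (tanP D s ξ)
    have h3 := norm_tanP_le D s ξ
    have h4 := norm_sub_le ξ (tanP D s ξ)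
    have h5 : ‖ξ‖ ≤ ‖tanP D s ξ‖ + ‖ξ - tanP D s ξ‖ := by
      simpa using norm_add_le (tanP D s ξ) (ξ - tanP D s ξ)
    have h6 := mul_le_mul_of_nonneg_left h5 (lt_min hf.alpha_pos one_pos).le
    have h7 := mul_le_mul_of_nonneg_right (min_le_left α 1) (norm_nonneg (tanP D s ξ))
    have h8 := mul_le_mul_of_nonneg_right (min_le_right α 1) (norm_nonneg (ξ - tanP D s ξ))
    have h9 := mul_le_mul_of_nonneg_left h3 hβ
    simp only [gOf]
    constructor <;> linarith
  lip := by
    filter_upwards [hf.lip] with y hy ξ ξ'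
    have h1 := hy (tanP D s ξ) (tanP D s ξ')
    rw [tanP_sub] at h1
    have h2 := mul_le_mul_of_nonneg_left (norm_tanP_le D s (ξ - ξ')) hf.lip_pos.le
    have h3 := abs_norm_sub_norm_le (ξ - tanP D s ξ) (ξ' - tanP D s ξ')
    have h4 : ‖ξ - tanP D s ξ - (ξ' - tanP D s ξ')‖ ≤ 2 * ‖ξ - ξ'‖ := by
      rw [sub_sub_sub_comm, tanP_sub]
      have := norm_sub_le (ξ - ξ') (tanP D s (ξ - ξ'))
      have := norm_tanP_le D s (ξ - ξ')
      linarith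
    simp only [gOf]
    rw [add_sub_add_comm]
    have := abs_add_le (f y (tanP D s ξ) - f y (tanP D s ξ'))
      (‖ξ - tanP D s ξ‖ - ‖ξ' - tanP D s ξ'‖)
    linarith

lemma g_lip_s {f : EN N → Mat d N → ℝ} {α β L : ℝ} (hf : StdIntegrand N d f α β L)
    {M : Set (EN d)} (D : ProjData M) {K : ℝ}
    (hK : ∀ s s', ‖Q D s - Q D s'‖ ≤ K * ‖s - s'‖) (s s' : EN d) :
    ∀ᵐ y ∂(volume : Measure (EN N)), ∀ η,
      |gOf D f y s η - gOf D f y s' η| ≤ (L + 1) * K * ‖s - s'‖ * ‖η‖ := by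
  filter_upwards [hf.lip] with y hy η
  have h0 : ‖tanP D s η - tanP D s' η‖ ≤ K * ‖s - s'‖ * ‖η‖ := by
    rw [tanP_eq, tanP_eq, ← ContinuousLinearMap.sub_comp]
    exact (ContinuousLinearMap.opNorm_comp_le _ _).trans
      (mul_le_mul_of_nonneg_right (hK s s') (norm_nonneg _))
  have h1 := hy (tanP D s η) (tanP D s' η)
  have h2 := mul_le_mul_of_nonneg_left h0 hf.lip_pos.le
  have h3 := abs_norm_sub_norm_le (η - tanP D s η) (η - tanP D s' η)
  rw [sub_sub_sub_cancel_left, norm_sub_rev (tanP D s' η)] at h3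
  have := abs_add_le (f y (tanP D s η) - f y (tanP D s' η))
      (‖η - tanP D s η‖ - ‖η - tanP D s' η‖)
  simp only [gOf]
  rw [add_sub_add_comm]
  linarith

lemma zero_mem_tangent {M : Set (EN d)} {s : EN d} (hs : s ∈ M) : (0 : EN d) ∈ TangentSet M s :=
  ⟨fun _ => s, fun _ => hs, rfl, hasDerivAt_const 0 s⟩

end Aux7

/-- Growth and Lipschitz estimates for `Tf_hom`:
coercivity/linear growth with the constants `α, β`, Lipschitz continuity in
`ξ`, and — for the extension of `Tf_hom` by the homogenized density of the
modified integrand `g` — Lipschitz continuity in `s` and global continuity. -/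
theorem statement_7
    (N d : ℕ) (M : Set (EN d)) (hM : IsNiceManifold d M)
    (f : EN N → Mat d N → ℝ) (α β L : ℝ) (hf : StdIntegrand N d f α β L)
    (D : ProjData M) :
    (∃ C : ℝ, 0 < C ∧
      ∀ s ∈ M, ∀ ξ ξ' : Mat d N, TangentCols M s ξ → TangentCols M s ξ' →
        α * ‖ξ‖ ≤ Tfhom f M s ξ ∧ Tfhom f M s ξ ≤ β * (1 + ‖ξ‖) ∧
        |Tfhom f M s ξ - Tfhom f M s ξ'| ≤ C * ‖ξ - ξ'‖) ∧
    (∃ C₁ : ℝ, 0 < C₁ ∧ ∀ (s s' : EN d) (ξ : Mat d N),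
      |ghomOf (gOf D f) s ξ - ghomOf (gOf D f) s' ξ| ≤ C₁ * ‖s - s'‖ * (1 + ‖ξ‖)) ∧
    Continuous (fun p : EN d × Mat d N => ghomOf (gOf D f) p.1 p.2) := by
  refine ⟨⟨L, hf.lip_pos, fun s hs ξ ξ' _ _ => ?_⟩, ?_⟩
  · have hS := Aux7.zero_mem_tangent hs
    have hg := Aux7.good_f hf
    simp only [Aux7.Tfhom_eq]
    exact ⟨(hg.lim_bounds hS ξ).1, (hg.lim_bounds hS ξ).2, hg.lim_lip hS ξ ξ'⟩
  obtain ⟨K, hK0, hK⟩ := Aux7.Q_lip D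
  have hα := hf.alpha_pos
  have hβ : 0 < β := hα.trans_le hf.alpha_le_beta
  have hL := hf.lip_pos
  have hm : 0 < min α 1 := lt_min hα one_pos
  have hs : ∃ C₁ : ℝ, 0 < C₁ ∧ ∀ (s s' : EN d) (ξ : Mat d N),
      |ghomOf (gOf D f) s ξ - ghomOf (gOf D f) s' ξ| ≤ C₁ * ‖s - s'‖ * (1 + ‖ξ‖) := by
    refine ⟨(L + 1) * K / min α 1 * (β + 2) + 1, by positivity, fun s s' ξ => ?_⟩
    simp only [Aux7.ghomOf_eq]
    have h1 := (Aux7.good_g hf D s).lim_compare (Aux7.good_g hf D s') (mem_univ 0)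
      (by positivity) (Aux7.g_lip_s hf D hK s s') ξ
    have h2 : (L + 1) * K * ‖s - s'‖ / min α 1 * ((β + 2) * (1 + ‖ξ‖)) =
      ((L + 1) * K / min α 1 * (β + 2)) * ‖s - s'‖ * (1 + ‖ξ‖) := by ring
    have h3 : 0 ≤ ‖s - s'‖ * (1 + ‖ξ‖) := by positivity
    linarith
  refine ⟨hs, ?_⟩
  obtain ⟨C₁, hC₁, hs⟩ := hs
  have hx : ∀ (s : EN d) (ξ ξ' : Mat d N),
      |ghomOf (gOf D f) s ξ - ghomOf (gOf D f) s ξ'| ≤ (L + 2) * ‖ξ - ξ'‖ := fun s ξ ξ' => by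
    simp only [Aux7.ghomOf_eq]
    exact (Aux7.good_g hf D s).lim_lip (mem_univ 0) ξ ξ'
  rw [continuous_iff_continuousAt]
  rintro ⟨s₀, ξ₀⟩
  refine tendsto_iff_dist_tendsto_zero.2 ?_
  refine squeeze_zero (g := fun p : EN d × Mat d N =>
    C₁ * ‖p.1 - s₀‖ * (1 + ‖p.2‖) + (L + 2) * ‖p.2 - ξ₀‖) (fun _ => dist_nonneg) ?_ ?_
  · rintro ⟨s, ξ⟩
    rw [Real.dist_eq]
    have h1 := hs s s₀ ξ
    have h2 := hx s₀ ξ ξ₀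
    exact (abs_sub_le _ (ghomOf (gOf D f) s₀ ξ) _).trans (add_le_add h1 h2)
  · have hc : Continuous (fun p : EN d × Mat d N =>
      C₁ * ‖p.1 - s₀‖ * (1 + ‖p.2‖) + (L + 2) * ‖p.2 - ξ₀‖) := by fun_prop
    have := hc.tendsto (s₀, ξ₀)
    simpa using this
end

section
/- (Recession estimate for Tf_hom) If f additionally satisfies (H4), then there exist C₂ > 0 and 0 < q < 1 such that |Tf_hom^∞(s,ξ) − Tf_hom(s,ξ)| ≤ C₂(1+|ξ|^{1−q}) for every (s,ξ) ∈ ℝ^d × ℝ^{d×N}, where Tf_hom^∞(s,ξ) := limsup_{t→∞} Tf_hom(s,tξ)/t and Tf_hom is extended to ℝ^d × ℝ^{d×N} by the homogenized density g_hom of the modified integrand g. -/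
open MeasureTheory Filter Set
open scoped ENNReal RealInnerProductSpace Topology NNReal

theorem limsup_aux {F : Filter ℝ} [F.NeBot] {u v : ℝ → ℝ} {a K B c : ℝ} (ha : 0 < a)
    (hu : ∀ᶠ t in F, c ≤ u t) (hv : ∀ᶠ t in F, v t ≤ B)
    (huv : ∀ᶠ t in F, u t ≤ a * v t + K) :
    limsup u F ≤ a * limsup v F + K := by
  have hvb : IsBoundedUnder (· ≤ ·) F v := isBoundedUnder_of_eventually_le hv
  have huc : IsCoboundedUnder (· ≤ ·) F u :=
    (isBoundedUnder_of_eventually_ge hu).isCoboundedUnder_le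
  refine le_of_forall_pos_le_add fun ε hε => ?_
  have h1 : limsup v F < limsup v F + ε / a := by linarith [div_pos hε ha]
  have h2 := eventually_lt_of_limsup_lt h1 hvb
  refine limsup_le_of_le huc ?_
  filter_upwards [h2, huv] with t h2 h3
  have : a * v t ≤ a * (limsup v F + ε / a) := mul_le_mul_of_nonneg_left h2.le ha.le
  have e : a * (ε / a) = ε := by field_simp
  nlinarith

theorem volume_posCube' (N : ℕ) {T : ℝ} (hT : 0 < T) :
    MeasurableSet (posCube N T) ∧ volume (posCube N T) = ENNReal.ofReal (T ^ N) := by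
  have hm : posCube N T = (MeasurableEquiv.toLp 2 (Fin N → ℝ)).symm ⁻¹'
      (Set.univ.pi fun _ => Set.Ioo 0 T) := by
    ext x; simp [posCube]
  have hms : MeasurableSet (Set.univ.pi fun _ : Fin N => Set.Ioo (0:ℝ) T) :=
    MeasurableSet.univ_pi fun _ => measurableSet_Ioo
  rw [hm]
  refine ⟨(MeasurableEquiv.toLp 2 (Fin N → ℝ)).symm.measurable hms, ?_⟩
  rw [(EuclideanSpace.volume_preserving_symm_measurableEquiv_toLp (Fin N)).measure_preimage
    hms.nullMeasurableSet, Real.volume_pi_Ioo]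
  simp [ENNReal.ofReal_pow hT.le]

theorem cell_nonneg {N d : ℕ} {h : EN N → Mat d N → ℝ} (hn : ∀ y X, 0 ≤ h y X) (ξ : Mat d N)
    {T : ℝ} (hT : 0 < T) : 0 ≤ freeCell h ξ T := by
  refine Real.sInf_nonneg ?_
  rintro c ⟨φ, K, -, -, rfl⟩
  exact mul_nonneg (by positivity) (integral_nonneg fun x => hn _ _)

theorem cell_le_of_mem {N d : ℕ} {h : EN N → Mat d N → ℝ} (hn : ∀ y X, 0 ≤ h y X) (ξ : Mat d N)
    {T : ℝ} (hT : 0 < T) (φ : EN N → EN d) (K : ℝ≥0) (hφ : LipschitzWith K φ)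
    (h0 : ∀ x, x ∉ posCube N T → φ x = 0) :
    freeCell h ξ T ≤ (T ^ N)⁻¹ * ∫ x in posCube N T, h x (ξ + fderiv ℝ φ x) := by
  refine csInf_le ⟨0, ?_⟩ ⟨φ, K, hφ, h0, rfl⟩
  rintro c ⟨φ, K, -, -, rfl⟩
  exact mul_nonneg (by positivity) (integral_nonneg fun x => hn _ _)

theorem cell_const (N : ℕ) {T : ℝ} (hT : 0 < T) (B : ℝ) :
    (T ^ N)⁻¹ * ∫ _x in posCube N T, B = B := by
  have hv := (volume_posCube' N hT).2
  have : 0 < T ^ N := by positivity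
  rw [setIntegral_const, Measure.real, hv, ENNReal.toReal_ofReal this.le, smul_eq_mul]
  field_simp

theorem cell_upper {N d : ℕ} {h : EN N → Mat d N → ℝ} (hn : ∀ y X, 0 ≤ h y X) (ξ : Mat d N)
    {T : ℝ} (hT : 0 < T) {B : ℝ} (hB : ∀ᵐ y ∂(volume : Measure (EN N)), h y ξ ≤ B) :
    freeCell h ξ T ≤ B := by
  have h1 := cell_le_of_mem hn ξ hT (fun _ => 0) 0 (LipschitzWith.const 0) (fun _ _ => rfl)
  refine h1.trans ?_
  rw [← cell_const N hT B]
  refine mul_le_mul_of_nonneg_left ?_ (by positivity)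
  refine integral_mono_of_nonneg (ae_of_all _ fun x => hn _ _) ?_ ?_
  · refine integrableOn_const ?_
    rw [(volume_posCube' N hT).2]; exact ENNReal.ofReal_ne_top
  · filter_upwards [ae_restrict_of_ae hB] with x hx
    simpa using hx

theorem cell_compare {N d : ℕ} {h : EN N → Mat d N → ℝ} (hn : ∀ y X, 0 ≤ h y X)
    (hint : ∀ (ξ : Mat d N) (T : ℝ) (φ : EN N → EN d) (K : ℝ≥0), 0 < T → LipschitzWith K φ →
      IntegrableOn (fun x => h x (ξ + fderiv ℝ φ x)) (posCube N T) volume)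
    (ξ : Mat d N) {T c a K : ℝ} (hT : 0 < T) (ha : 0 < a)
    (hc : ∀ᵐ y ∂(volume : Measure (EN N)), ∀ X, h y (c • X) ≤ a * h y X + K) :
    freeCell h (c • ξ) T ≤ a * freeCell h ξ T + K := by
  have key : (freeCell h (c • ξ) T - K) / a ≤ freeCell h ξ T := by
    refine le_csInf ⟨_, fun _ => 0, 0, LipschitzWith.const 0, fun _ _ => rfl, rfl⟩ ?_
    rintro v ⟨φ, k, hφ, h0, rfl⟩
    have hi := hint ξ T φ k hT hφ
    have h1 := cell_le_of_mem hn (c • ξ) hT (c • φ) (‖c‖₊ * k)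
      ((lipschitzWith_smul c).comp hφ) (fun x hx => by simp [h0 x hx])
    have hfin : IntegrableOn (fun _ : EN N => K) (posCube N T) volume := by
      refine integrableOn_const ?_
      rw [(volume_posCube' N hT).2]; exact ENNReal.ofReal_ne_top
    have h2 : ∫ x in posCube N T, h x (c • ξ + fderiv ℝ (c • φ) x) ≤
        ∫ x in posCube N T, (a * h x (ξ + fderiv ℝ φ x) + K) := by
      refine integral_mono_of_nonneg (ae_of_all _ fun x => hn _ _)
        ((hi.const_mul a).add hfin) ?_
      filter_upwards [ae_restrict_of_ae hc] with x hx
      have := hx (ξ + fderiv ℝ φ x)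
      rw [fderiv_const_smul_field]
      simpa [smul_add] using this
    rw [integral_add (hi.const_mul a) hfin, integral_const_mul] at h2
    have h3 := mul_le_mul_of_nonneg_left h2 (show 0 ≤ (T ^ N)⁻¹ by positivity)
    rw [mul_add, cell_const N hT K] at h3
    rw [div_le_iff₀ ha]
    nlinarith
  rw [div_le_iff₀ ha] at key
  linarith

theorem integrable_cara {N d : ℕ} {f : EN N → Mat d N → ℝ} {α β L : ℝ}
    (hf : StdIntegrand N d f α β L) (G : EN N → Mat d N) (hG : Measurable G) (B : ℝ)
    (hB : ∀ x, ‖G x‖ ≤ B) {T : ℝ} (hT : 0 < T) :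
    IntegrableOn (fun x => f x (G x)) (posCube N T) volume := by
  have hβ : 0 < β := hf.alpha_pos.trans_le hf.alpha_le_beta
  have : FiniteDimensional ℝ (Mat d N) := inferInstance
  have := FiniteDimensional.proper ℝ (Mat d N)
  refine Measure.integrableOn_of_bounded (M := β * (1 + B)) ?_ ?_ ?_
  · rw [(volume_posCube' N hT).2]; exact ENNReal.ofReal_ne_top
  · obtain ⟨Z, hZ, hZm, hZ0⟩ := exists_measurable_superset_of_null (ae_iff.1 hf.lip)
    have hm : Measurable (Function.uncurry fun (X : Mat d N) (y : EN N) =>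
        Zᶜ.indicator (fun y => f y X) y) := by
      refine measurable_uncurry_of_continuous_of_measurable ?_ ?_
      · intro y
        by_cases hy : y ∈ Z
        · have : (fun X : Mat d N => Zᶜ.indicator (fun y => f y X) y) = fun _ => 0 := by
            ext X; simp [hy]
          rw [this]; exact continuous_const
        · have : (fun X : Mat d N => Zᶜ.indicator (fun y => f y X) y) = fun X => f y X := by
            ext X; simp [hy]
          rw [this]
          have hy2 : ∀ ξ ξ', |f y ξ - f y ξ'| ≤ L * ‖ξ - ξ'‖ := by
            by_contra hcon
            exact hy (hZ hcon)
          refine (LipschitzWith.of_dist_le_mul (K := ⟨L, hf.lip_pos.le⟩) fun a b => ?_).continuous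
          rw [Real.dist_eq, dist_eq_norm]
          exact hy2 a b
      · intro X
        exact (hf.meas X).indicator hZm.compl
    have hm2 : Measurable fun x => Zᶜ.indicator (fun y => f y (G x)) x :=
      hm.comp (hG.prodMk measurable_id)
    refine ⟨_, hm2.stronglyMeasurable, ?_⟩
    have : ∀ᵐ x ∂(volume : Measure (EN N)), x ∉ Z := by
      rw [ae_iff]; simpa using hZ0
    filter_upwards [this] with x hx
    simp [hx]
  · filter_upwards [ae_restrict_of_ae hf.growth] with x hx
    rw [Real.norm_eq_abs, abs_of_nonneg (hf.nonneg _ _)]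
    refine (hx (G x)).2.trans (mul_le_mul_of_nonneg_left ?_ hβ.le)
    linarith [hB x]

theorem tanProj_bound {d : ℕ} {M : Set (EN d)} (D : ProjData M) {s : EN d} (hs : s ∈ M) (v : EN d) :
    ‖D.tanProj s v‖ ≤ ‖v‖ := by
  have h1 : ⟪D.tanProj s v, D.tanProj s v⟫ = ⟪v, D.tanProj s v⟫ := by
    rw [D.tanProj_symm s hs, D.tanProj_id s hs _ (D.tanProj_mem s hs v)]
  have h2 := real_inner_le_norm v (D.tanProj s v)
  rw [← h1, real_inner_self_eq_norm_sq] at h2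
  by_contra! hc
  nlinarith [norm_nonneg v]

theorem tanP_bound {N d : ℕ} {M : Set (EN d)} (D : ProjData M) (s : EN d) (X : Mat d N) :
    ‖tanP D s X‖ ≤ ‖X‖ := by
  unfold tanP
  by_cases hs : Metric.infDist s M < D.δ₀
  · refine ContinuousLinearMap.opNorm_le_bound _ (norm_nonneg _) fun w => ?_
    have hc := D.chi_range s
    simp only [smul_apply, ContinuousLinearMap.comp_apply, norm_smul]
    rw [Real.norm_eq_abs, abs_of_nonneg hc.1]
    calc D.chi s * ‖D.tanProj (D.pr s) (X w)‖ ≤ 1 * ‖X w‖ :=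
          mul_le_mul hc.2 (tanProj_bound D (D.pr_mem s hs) _) (norm_nonneg _) zero_le_one
      _ ≤ ‖X‖ * ‖w‖ := by rw [one_mul]; exact X.le_opNorm w
  · have : D.chi s = 0 := D.chi_zero s (by linarith [D.δ₀_pos])
    rw [this]
    have e : (0 : ℝ) • ((D.tanProj (D.pr s)).comp X) = 0 := by
      ext1 w
      exact zero_smul ℝ (D.tanProj (D.pr s) (X w))
    rw [e, norm_zero]
    exact norm_nonneg _

theorem tanP_smul {N d : ℕ} {M : Set (EN d)} (D : ProjData M) (s : EN d) (c : ℝ) (X : Mat d N) :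
    tanP D s (c • X) = c • tanP D s X := by
  unfold tanP
  rw [ContinuousLinearMap.comp_smul, smul_comm]

theorem tanP_cont {N d : ℕ} {M : Set (EN d)} (D : ProjData M) (s : EN d) :
    Continuous (fun X : Mat d N => tanP D s X) := by
  unfold tanP
  fun_prop

theorem recc_bdd {N d : ℕ} {h : Mat d N → ℝ} {β : ℝ} (hβ : 0 < β) (hn : ∀ X, 0 ≤ h X)
    (hg : ∀ X, h X ≤ β * (1 + ‖X‖)) (X : Mat d N) :
    (∀ᶠ t : ℝ in atTop, 0 ≤ h (t • X) / t) ∧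
    (∀ᶠ t : ℝ in atTop, h (t • X) / t ≤ β * (1 + ‖X‖)) := by
  refine ⟨?_, ?_⟩
  · filter_upwards [eventually_ge_atTop (1:ℝ)] with t ht
    exact div_nonneg (hn _) (by linarith)
  · filter_upwards [eventually_ge_atTop (1:ℝ)] with t ht
    rw [div_le_iff₀ (by linarith)]
    have := hg (t • X)
    rw [norm_smul, Real.norm_eq_abs, abs_of_nonneg (by linarith)] at this
    nlinarith [norm_nonneg X]

theorem recc_smul_le {N d : ℕ} {h : Mat d N → ℝ} {β : ℝ} (hβ : 0 < β) (hn : ∀ X, 0 ≤ h X)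
    (hg : ∀ X, h X ≤ β * (1 + ‖X‖)) (X : Mat d N) {t : ℝ} (ht : 0 < t) :
    recc h (t • X) ≤ t * recc h X := by
  have hmap : Filter.map (fun r : ℝ => r * t) atTop = atTop :=
    (OrderIso.mulRight₀ t ht).map_atTop
  have e : recc h X = limsup (fun r : ℝ => h ((r * t) • X) / (r * t)) atTop := by
    unfold recc
    conv_lhs => rw [← hmap]
    rfl
  rw [e]
  have hb := recc_bdd hβ hn hg X
  have htend : Tendsto (fun r : ℝ => r * t) atTop atTop := hmap.le
  have := limsup_aux (F := (atTop : Filter ℝ)) (u := fun r => h (r • (t • X)) / r)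
    (v := fun r : ℝ => h ((r * t) • X) / (r * t)) (K := 0) ht (recc_bdd hβ hn hg (t • X)).1
    (htend.eventually hb.2) (Eventually.of_forall fun r => by
      rw [smul_smul, add_zero]
      refine le_of_eq ?_
      by_cases hr : r = 0
      · simp [hr]
      · field_simp)
  simpa [recc] using this

theorem recc_smul {N d : ℕ} {h : Mat d N → ℝ} {β : ℝ} (hβ : 0 < β) (hn : ∀ X, 0 ≤ h X)
    (hg : ∀ X, h X ≤ β * (1 + ‖X‖)) (X : Mat d N) {t : ℝ} (ht : 0 < t) :
    recc h (t • X) = t * recc h X := by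
  refine le_antisymm (recc_smul_le hβ hn hg X ht) ?_
  have := recc_smul_le hβ hn hg (t • X) (inv_pos.2 ht)
  rw [smul_smul, inv_mul_cancel₀ ht.ne', one_smul] at this
  have h2 := mul_le_mul_of_nonneg_left this ht.le
  rwa [← mul_assoc, mul_inv_cancel₀ ht.ne', one_mul] at h2

theorem f_scale {N d : ℕ} {h : Mat d N → ℝ} {β C q : ℝ} (hβ : 0 < β) (hn : ∀ X, 0 ≤ h X)
    (hg : ∀ X, h X ≤ β * (1 + ‖X‖)) (hC : 0 < C) (hq : 0 < q) (hq1 : q < 1)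
    (h4 : ∀ X, |h X - recc h X| ≤ C * (1 + ‖X‖ ^ (1 - q))) (X : Mat d N) {t : ℝ} (ht : 1 ≤ t) :
    |h (t • X) - t * h X| ≤ t * (2 * C * (1 + ‖X‖ ^ (1 - q))) := by
  have h0 : 0 < t := by linarith
  have h1 := h4 X
  have h2 := h4 (t • X)
  rw [recc_smul hβ hn hg X h0, norm_smul, Real.norm_eq_abs, abs_of_pos h0,
    Real.mul_rpow h0.le (norm_nonneg _)] at h2
  have h3 : t ^ (1 - q) ≤ t := by
    conv_rhs => rw [← Real.rpow_one t]
    exact Real.rpow_le_rpow_of_exponent_le ht (by linarith)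
  have h4 : 0 ≤ ‖X‖ ^ (1 - q) := by positivity
  have h5 : C * (1 + t ^ (1 - q) * ‖X‖ ^ (1 - q)) ≤ C * (t + t * ‖X‖ ^ (1 - q)) := by gcongr
  rw [abs_le] at *
  constructor <;> nlinarith [mul_le_mul_of_nonneg_left h1.1 h0.le,
    mul_le_mul_of_nonneg_left h1.2 h0.le]

theorem young_aux {x A q : ℝ} (hx : 0 ≤ x) (hA : 0 < A) (hq : 0 < q) (hq1 : q < 1) :
    x ^ (1 - q) ≤ A ^ (1 - q) + A ^ (-q) * x := by
  rcases le_or_gt x A with h | h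
  · have := Real.rpow_le_rpow hx h (show 0 ≤ 1 - q by linarith)
    have : 0 ≤ A ^ (-q) * x := by positivity
    linarith
  · have hx0 : 0 < x := hA.trans h
    have h1 : x ^ (1 - q) = x ^ (-q) * x := by
      rw [show 1 - q = -q + 1 by ring, Real.rpow_add hx0, Real.rpow_one]
    have h2 : x ^ (-q) ≤ A ^ (-q) := Real.rpow_le_rpow_of_nonpos hA h.le (by linarith)
    have : 0 ≤ A ^ (1 - q) := by positivity
    rw [h1]
    nlinarith


theorem gOf_scale {N d : ℕ} {M : Set (EN d)} {f : EN N → Mat d N → ℝ} {α β L C q : ℝ}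
    (hf : StdIntegrand N d f α β L) (hf4 : H4 f C q) (D : ProjData M) (s : EN d)
    {A : ℝ} (hA : 0 < A) {t : ℝ} (ht : 1 ≤ t) :
    ∀ᵐ y ∂(volume : Measure (EN N)), ∀ X,
      gOf D f y s (t • X) ≤ t * (1 + 2 * C * A ^ (-q) / α) * gOf D f y s X
        + t * (2 * C * (1 + A ^ (1 - q))) ∧
      t * gOf D f y s X ≤ (1 + 2 * C * A ^ (-q) / α) * gOf D f y s (t • X)
        + t * (2 * C * (1 + A ^ (1 - q))) := by
  obtain ⟨hC, hq, hq1, h4⟩ := hf4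
  have hα := hf.alpha_pos
  have hβ : 0 < β := hα.trans_le hf.alpha_le_beta
  have h0 : 0 < t := by linarith
  filter_upwards [hf.growth, h4] with y hg h4 X
  have hs := f_scale hβ (hf.nonneg y) (fun X => (hg X).2) hC hq hq1 h4 (tanP D s X) ht
  have hy := young_aux (norm_nonneg (tanP D s X)) hA hq hq1
  have hgt : gOf D f y s (t • X) = f y (t • tanP D s X) + t * ‖X - tanP D s X‖ := by
    simp only [gOf]
    have e : t • X - t • tanP D s X = t • (X - tanP D s X) := by
      ext1 w
      exact (smul_sub t (X w) (tanP D s X w)).symm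
    rw [tanP_smul, e, norm_smul, Real.norm_eq_abs, abs_of_pos h0]
  have hg1 : gOf D f y s X = f y (tanP D s X) + ‖X - tanP D s X‖ := rfl
  have hl1 := (hg (tanP D s X)).1
  have hl2 := (hg (t • tanP D s X)).1
  rw [norm_smul, Real.norm_eq_abs, abs_of_pos h0] at hl2
  set PX := tanP D s X
  set n := ‖X - PX‖
  have hn : 0 ≤ n := norm_nonneg _
  have hb : 0 ≤ A ^ (-q) := by positivity
  set p := A ^ (1 - q)
  set b := A ^ (-q)
  have m1 : ‖PX‖ ≤ (f y PX + n) / α := by rw [le_div_iff₀ hα]; linarith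
  have m2 : t * ‖PX‖ ≤ (f y (t • PX) + t * n) / α := by
    rw [le_div_iff₀ hα]; nlinarith
  rw [abs_le] at hs
  have k1 : t * (2 * C * (1 + ‖PX‖ ^ (1 - q))) ≤ t * (2 * C * (1 + p)) + 2 * C * b * (t * ‖PX‖) := by
    have := mul_le_mul_of_nonneg_left hy (show 0 ≤ t * (2 * C) by positivity)
    linarith
  have k2 : 2 * C * b * (t * ‖PX‖) ≤ 2 * C * b * (t * ((f y PX + n) / α)) := by gcongr
  have k3 : 2 * C * b * (t * ‖PX‖) ≤ 2 * C * b * ((f y (t • PX) + t * n) / α) := by gcongr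
  rw [hgt, hg1]
  constructor
  · have e : t * (1 + 2 * C * b / α) * (f y PX + n) =
      t * (f y PX + n) + 2 * C * b * (t * ((f y PX + n) / α)) := by ring
    rw [e]; linarith [hs.2]
  · have e : (1 + 2 * C * b / α) * (f y (t • PX) + t * n) =
      (f y (t • PX) + t * n) + 2 * C * b * ((f y (t • PX) + t * n) / α) := by ring
    rw [e]; linarith [hs.1]

theorem gOf_int {N d : ℕ} {M : Set (EN d)} {f : EN N → Mat d N → ℝ} {α β L : ℝ}
    (hf : StdIntegrand N d f α β L) (D : ProjData M) (s : EN d)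
    (ξ : Mat d N) (T : ℝ) (φ : EN N → EN d) (K : ℝ≥0) (hT : 0 < T) (hφ : LipschitzWith K φ) :
    IntegrableOn (fun x => gOf D f x s (ξ + fderiv ℝ φ x)) (posCube N T) volume := by
  have hG : Measurable fun x => ξ + fderiv ℝ φ x := (measurable_fderiv ℝ φ).const_add ξ
  have hb : ∀ x, ‖ξ + fderiv ℝ φ x‖ ≤ ‖ξ‖ + K := fun x =>
    (norm_add_le _ _).trans (by gcongr; exact norm_fderiv_le_of_lipschitz ℝ hφ)
  have hP : Measurable fun x => tanP D s (ξ + fderiv ℝ φ x) := (tanP_cont D s).measurable.comp hG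
  have : FiniteDimensional ℝ (Mat d N) := inferInstance
  have := FiniteDimensional.proper ℝ (Mat d N)
  refine Integrable.add (integrable_cara hf _ hP (‖ξ‖ + K)
    (fun x => (tanP_bound D s _).trans (hb x)) hT) ?_
  refine Measure.integrableOn_of_bounded (M := 2 * (‖ξ‖ + K)) ?_ ?_ ?_
  · rw [(volume_posCube' N hT).2]; exact ENNReal.ofReal_ne_top
  · exact (hG.sub hP).norm.aestronglyMeasurable
  · refine ae_of_all _ fun x => ?_
    rw [norm_norm]
    refine (norm_sub_le _ _).trans ?_
    linarith [(tanP_bound D s (ξ + fderiv ℝ φ x)).trans (hb x), hb x]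

theorem ghom_scale {N d : ℕ} {M : Set (EN d)} {f : EN N → Mat d N → ℝ} {α β L C q : ℝ}
    (hf : StdIntegrand N d f α β L) (hf4 : H4 f C q) (D : ProjData M) (s : EN d)
    (ξ : Mat d N) {t : ℝ} (ht : 1 ≤ t) :
    |ghomOf (gOf D f) s (t • ξ) / t - ghomOf (gOf D f) s ξ| ≤
      (2 * C + 2 * C * (1 + (β + 2) / α)) * (1 + ‖ξ‖ ^ (1 - q)) := by
  have hC := hf4.1
  have hq := hf4.2.1
  have hq1 := hf4.2.2.1
  have hα := hf.alpha_pos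
  have hβ : 0 < β := hα.trans_le hf.alpha_le_beta
  have h0 : 0 < t := by linarith
  have hA : 0 < 1 + ‖ξ‖ := by positivity
  set A := 1 + ‖ξ‖ with hAdef
  have hsc := gOf_scale hf hf4 D s hA ht
  set ε := 2 * C * A ^ (-q) / α with hε
  set K0 := 2 * C * (1 + A ^ (1 - q)) with hK0
  have hε0 : 0 ≤ ε := by positivity
  have hn : ∀ y X, 0 ≤ gOf D f y s X := fun y X =>
    add_nonneg (hf.nonneg _ _) (norm_nonneg _)
  have hup : ∀ X : Mat d N, ∀ T : ℝ, 0 < T →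
      freeCell (fun y => gOf D f y s) X T ≤ (β + 2) * (1 + ‖X‖) := by
    intro X T hT
    refine cell_upper hn X hT ?_
    filter_upwards [hf.growth] with y hg
    have h1 := (hg (tanP D s X)).2
    have h2 := tanP_bound D s X
    have h3 := norm_sub_le X (tanP D s X)
    simp only [gOf]
    nlinarith
  have hint := gOf_int hf D s
  have c1 : ∀ T : ℝ, 0 < T → freeCell (fun y => gOf D f y s) (t • ξ) T ≤
      t * freeCell (fun y => gOf D f y s) ξ T + t * (K0 + ε * ((β + 2) * A)) := by
    intro T hT
    have := cell_compare (h := fun y => gOf D f y s) hn hint ξ (c := t) (a := t * (1 + ε))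
      (K := t * K0) hT (by positivity) (by filter_upwards [hsc] with y hy X using (hy X).1)
    have h2 := mul_le_mul_of_nonneg_left (hup ξ T hT) (show 0 ≤ t * ε by positivity)
    rw [← hAdef] at h2
    linarith
  have c2 : ∀ T : ℝ, 0 < T → freeCell (fun y => gOf D f y s) ξ T ≤
      t⁻¹ * freeCell (fun y => gOf D f y s) (t • ξ) T + (K0 + ε * ((β + 2) * A)) := by
    intro T hT
    have := cell_compare (h := fun y => gOf D f y s) hn hint (t • ξ) (c := t⁻¹)
      (a := t⁻¹ * (1 + ε)) (K := K0) hT (by positivity) (by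
        filter_upwards [hsc] with y hy X
        have := (hy (t⁻¹ • X)).2
        rw [smul_smul, mul_inv_cancel₀ h0.ne', one_smul] at this
        have h3 := mul_le_mul_of_nonneg_left this (inv_pos.2 h0).le
        rw [← mul_assoc, inv_mul_cancel₀ h0.ne', one_mul, mul_add, ← mul_assoc, ← mul_assoc t⁻¹ t,
          inv_mul_cancel₀ h0.ne', one_mul] at h3
        exact h3)
    rw [smul_smul, inv_mul_cancel₀ h0.ne', one_smul] at this
    have h2 : t⁻¹ * freeCell (fun y => gOf D f y s) (t • ξ) T ≤ (β + 2) * A := by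
      rw [inv_mul_le_iff₀ h0]
      refine (hup _ T hT).trans ?_
      rw [norm_smul, Real.norm_eq_abs, abs_of_pos h0, hAdef]
      have : 1 + t * ‖ξ‖ ≤ t * (1 + ‖ξ‖) := by linarith
      calc (β + 2) * (1 + t * ‖ξ‖) ≤ (β + 2) * (t * (1 + ‖ξ‖)) := by gcongr
        _ = _ := by ring
    have h3 := mul_le_mul_of_nonneg_left h2 hε0
    linarith
  have hpos : ∀ᶠ T : ℝ in atTop, 0 < T := eventually_gt_atTop 0
  have l1 := limsup_aux (F := (atTop : Filter ℝ)) h0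
    (hpos.mono fun T hT => cell_nonneg hn (t • ξ) hT) (hpos.mono (hup ξ)) (hpos.mono c1)
  have l2 := limsup_aux (F := (atTop : Filter ℝ)) (inv_pos.2 h0)
    (hpos.mono fun T hT => cell_nonneg hn ξ hT) (hpos.mono (hup (t • ξ))) (hpos.mono c2)
  change ghomOf (gOf D f) s (t • ξ) ≤ t * ghomOf (gOf D f) s ξ + _ at l1
  change ghomOf (gOf D f) s ξ ≤ t⁻¹ * ghomOf (gOf D f) s (t • ξ) + _ at l2
  have hfinal : K0 + ε * ((β + 2) * A) ≤
      (2 * C + 2 * C * (1 + (β + 2) / α)) * (1 + ‖ξ‖ ^ (1 - q)) := by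
    have e1 : A ^ (1 - q) = A ^ (-q) * A := by
      rw [show 1 - q = -q + 1 by ring, Real.rpow_add hA, Real.rpow_one]
    have e2 : K0 + ε * ((β + 2) * A) = 2 * C + 2 * C * (1 + (β + 2) / α) * A ^ (1 - q) := by
      rw [hK0, hε, e1]; ring
    have e3 : A ^ (1 - q) ≤ 1 + ‖ξ‖ ^ (1 - q) := by
      have := Real.rpow_add_le_add_rpow zero_le_one (norm_nonneg ξ)
        (show 0 ≤ 1 - q by linarith) (by linarith)
      rwa [Real.one_rpow] at this
    have e4 : 0 ≤ ‖ξ‖ ^ (1 - q) := by positivity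
    rw [e2, add_mul]
    refine add_le_add ?_ (mul_le_mul_of_nonneg_left e3 (by positivity))
    nlinarith
  refine le_trans ?_ hfinal
  rw [abs_le]
  constructor
  · rw [div_eq_inv_mul]; linarith
  · rw [sub_le_iff_le_add, div_le_iff₀ h0]; linarith

/-- Recession estimate for `Tf_hom`: under (H4), the
(extended) tangentially homogenized density satisfies
`|Tf_hom^∞(s,ξ) - Tf_hom(s,ξ)| ≤ C₂(1+|ξ|^{1-q})` on all of
`ℝ^d × ℝ^{d×N}`. -/
theorem statement_8
    (N d : ℕ) (M : Set (EN d)) (hM : IsNiceManifold d M)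
    (f : EN N → Mat d N → ℝ) (α β L C q : ℝ) (hf : StdIntegrand N d f α β L)
    (hf4 : H4 f C q) (D : ProjData M) :
    ∃ C₂ q' : ℝ, 0 < C₂ ∧ 0 < q' ∧ q' < 1 ∧
      ∀ (s : EN d) (ξ : Mat d N),
        |recc (ghomOf (gOf D f) s) ξ - ghomOf (gOf D f) s ξ| ≤
          C₂ * (1 + ‖ξ‖ ^ (1 - q')) := by
  have hC := hf4.1
  have hα := hf.alpha_pos
  have hβ : 0 < β := hα.trans_le hf.alpha_le_beta
  refine ⟨2 * C + 2 * C * (1 + (β + 2) / α), q, by positivity, hf4.2.1, hf4.2.2.1, fun s ξ => ?_⟩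
  have key : ∀ᶠ t : ℝ in atTop, |ghomOf (gOf D f) s (t • ξ) / t - ghomOf (gOf D f) s ξ| ≤
      (2 * C + 2 * C * (1 + (β + 2) / α)) * (1 + ‖ξ‖ ^ (1 - q)) :=
    (eventually_ge_atTop 1).mono fun t ht => ghom_scale hf hf4 D s ξ ht
  set B := (2 * C + 2 * C * (1 + (β + 2) / α)) * (1 + ‖ξ‖ ^ (1 - q))
  set G := ghomOf (gOf D f) s ξ
  have hle : ∀ᶠ t : ℝ in atTop, ghomOf (gOf D f) s (t • ξ) / t ≤ G + B :=
    key.mono fun t h => by linarith [(abs_le.1 h).2]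
  have hge : ∀ᶠ t : ℝ in atTop, G - B ≤ ghomOf (gOf D f) s (t • ξ) / t :=
    key.mono fun t h => by linarith [(abs_le.1 h).1]
  have u1 : recc (ghomOf (gOf D f) s) ξ ≤ G + B :=
    limsup_le_of_le (isBoundedUnder_of_eventually_ge hge).isCoboundedUnder_le hle
  have u2 : G - B ≤ recc (ghomOf (gOf D f) s) ξ :=
    le_limsup_of_frequently_le hge.frequently (isBoundedUnder_of_eventually_le hle)
  rw [abs_le]
  constructor <;> linarith
end
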